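/- Let A be a skew left brace such that A = B + C is a factorization through left ideals B and C which are trivial as skew left braces. Then B*C and C*B are strong left ideals of A, and both B*C and C*B are trivial as skew left braces. -/

import Mathlib

/-- A skew left brace: `(A,+)` and `(A,∘)` are groups (sharing the same identity `0`)
such that `a ∘ (b + c) = a ∘ b - a + a ∘ c`.  Here `circ` is the operation `∘` and
`cinv a` is the inverse of `a` in `(A,∘)`. -/
class SkewBrace (A : Type*) extends AddGroup A where
  circ : A → A → A
  cinv : A → A
  circ_assoc : ∀ a b c : A, circ (circ a b) c = circ a (circ b c)
  zero_circ : ∀ a : A, circ 0 a = a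
  circ_zero : ∀ a : A, circ a 0 = a
  cinv_circ : ∀ a : A, circ (cinv a) a = 0
  circ_cinv : ∀ a : A, circ a (cinv a) = 0
  compat : ∀ a b c : A, circ a (b + c) = circ a b + -a + circ a c

open SkewBrace

/-- `lam a b = -a + a ∘ b`. -/
def lam {A : Type*} [SkewBrace A] (a b : A) : A := -a + circ a b

/-- The star operation `a * b = lam a b - b = -a + a ∘ b - b`. -/
def bstar {A : Type*} [SkewBrace A] (a b : A) : A := lam a b - b

/-- `X * Y`: the subgroup of `(A,+)` generated by `{x * y : x ∈ X, y ∈ Y}`. -/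
def starSpan {A : Type*} [SkewBrace A] (X Y : Set A) : AddSubgroup A :=
  AddSubgroup.closure {z | ∃ x ∈ X, ∃ y ∈ Y, z = bstar x y}

/-- The right series of `st`: `rseriesOf st 0 = A = A^(1)` and
`rseriesOf st n = A^(n+1)`, so that `A^(n+1) = A^(n) * A`. -/
def rseriesOf {G : Type*} [AddGroup G] (st : G → G → G) : ℕ → AddSubgroup G
  | 0 => ⊤
  | n + 1 => AddSubgroup.closure {z | ∃ u ∈ rseriesOf st n, ∃ a : G, z = st u a}

/-!
Everything follows from two identities,
`x * (y + z) = x * y + (y + x * z - y)` and `(x ∘ y) * z = λ_x (y * z) + x * z`.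
The first shows that `X * A` is normal in `(A,+)` for every `X ⊆ A`; since `B` is trivial and
`A = C + B`, it also gives `B * C = B * A`. The second shows that `B * C` is invariant under `λ_b`
for `b ∈ B`; since `A = B ∘ C` and `λ_c` is the identity on `C ⊇ B * C` for `c ∈ C`, this makes
`B * C` a left ideal. The statements for `C * B` follow by symmetry, since also `A = C + B`.
-/

namespace SkewBrace

variable {A : Type*} [SkewBrace A]

/-- A left ideal: an additive subgroup invariant under every `λ_a`. -/
def IsLeftIdeal (I : AddSubgroup A) : Prop := ∀ a : A, ∀ x ∈ I, lam a x ∈ I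

/-- A subset on which `+` and `∘` agree, that is, one which is trivial as a skew left brace. -/
def IsTrivialOn (S : Set A) : Prop := ∀ x ∈ S, ∀ y ∈ S, x + y = circ x y

/-- A factorization `A = B + C`; the summands of an element need not be unique. -/
def IsFactorization (B C : AddSubgroup A) : Prop := ∀ a : A, ∃ b ∈ B, ∃ c ∈ C, a = b + c

theorem add_lam (a b : A) : a + lam a b = circ a b := add_neg_cancel_left a _

/-- The map `λ_a` as an endomorphism of `(A,+)`. -/
def lamHom (a : A) : A →+ A :=
  AddMonoidHom.mk' (lam a) fun b c => by simp only [lam, compat, add_assoc]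

theorem lam_add (a b c : A) : lam a (b + c) = lam a b + lam a c := map_add (lamHom a) b c

theorem lam_sub (a b c : A) : lam a (b - c) = lam a b - lam a c := map_sub (lamHom a) b c

theorem lam_circ (a b c : A) : lam (circ a b) c = lam a (lam b c) := by
  apply add_left_cancel (a := circ a b)
  calc circ a b + lam (circ a b) c = circ a (circ b c) := by rw [add_lam, circ_assoc]
    _ = a + lam a (b + lam b c) := by rw [add_lam, add_lam]
    _ = circ a b + lam a (lam b c) := by rw [lam_add, ← add_assoc, add_lam]

theorem circ_lam_cinv (a b : A) : circ a (lam (cinv a) b) = a + b := by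
  rw [← add_lam, ← lam_circ, circ_cinv, lam, zero_circ, neg_zero, zero_add]

theorem bstar_eq_zero_iff {a b : A} : bstar a b = 0 ↔ lam a b = b := sub_eq_zero

theorem bstar_add_right (a b c : A) : bstar a (b + c) = bstar a b + (b + bstar a c + -b) := by
  simp only [bstar, lam_add, sub_eq_add_neg, neg_add_rev, add_assoc, neg_add_cancel_left]

theorem bstar_circ_left (a b c : A) : bstar (circ a b) c = lam a (bstar b c) + bstar a c := by
  simp only [bstar, lam_circ, lam_sub, sub_add_sub_cancel]

namespace IsTrivialOn

variable {S T : Set A}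

theorem mono (hT : IsTrivialOn T) (hST : S ⊆ T) : IsTrivialOn S :=
  fun x hx y hy => hT x (hST hx) y (hST hy)

theorem lam_eq (hS : IsTrivialOn S) {x y : A} (hx : x ∈ S) (hy : y ∈ S) : lam x y = y := by
  rw [lam, ← hS x hx y hy, neg_add_cancel_left]

theorem circ_mem {B : AddSubgroup A} (hB : IsTrivialOn (B : Set A)) {x y : A} (hx : x ∈ B)
    (hy : y ∈ B) : circ x y ∈ B :=
  hB x hx y hy ▸ B.add_mem hx hy

end IsTrivialOn

section StarSpan

variable {X Y : Set A}

theorem bstar_mem_starSpan {x y : A} (hx : x ∈ X) (hy : y ∈ Y) : bstar x y ∈ starSpan X Y :=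
  AddSubgroup.subset_closure ⟨x, hx, y, hy, rfl⟩

theorem starSpan_le {H : AddSubgroup A} : starSpan X Y ≤ H ↔ ∀ x ∈ X, ∀ y ∈ Y, bstar x y ∈ H := by
  rw [starSpan, AddSubgroup.closure_le]
  constructor
  · exact fun h x hx y hy => h ⟨x, hx, y, hy, rfl⟩
  · rintro h _ ⟨x, hx, y, hy, rfl⟩
    exact h x hx y hy

theorem IsLeftIdeal.starSpan_le_self {I : AddSubgroup A} (hI : IsLeftIdeal I) :
    starSpan X (I : Set A) ≤ I :=
  starSpan_le.2 fun x _ y hy => I.sub_mem (hI x y hy) hy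

theorem lam_mem_starSpan (hX : ∀ x ∈ X, ∀ y ∈ X, circ x y ∈ X) {a z : A} (ha : a ∈ X)
    (hz : z ∈ starSpan X Y) : lam a z ∈ starSpan X Y := by
  suffices h : starSpan X Y ≤ (starSpan X Y).comap (lamHom a) from h hz
  refine starSpan_le.2 fun x hx y hy => ?_
  change lam a (bstar x y) ∈ starSpan X Y
  rw [eq_sub_of_add_eq (bstar_circ_left a x y).symm]
  exact sub_mem (bstar_mem_starSpan (hX a ha x hx) hy) (bstar_mem_starSpan ha hy)

theorem le_normalizer_starSpan (X : Set A) (H : AddSubgroup A) :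
    H ≤ AddSubgroup.normalizer (starSpan X (H : Set A) : Set A) := by
  rw [starSpan, AddSubgroup.le_normalizer_closure_iff]
  rintro a ha _ ⟨x, hx, h, hh, rfl⟩
  rw [← neg_add_eq_of_eq_add (bstar_add_right x a h)]
  exact add_mem (neg_mem (bstar_mem_starSpan hx ha)) (bstar_mem_starSpan hx (H.add_mem ha hh))

theorem normal_starSpan_top (X : Set A) : (starSpan X ((⊤ : AddSubgroup A) : Set A)).Normal :=
  AddSubgroup.normalizer_eq_top_iff.1 (top_le_iff.1 (le_normalizer_starSpan X ⊤))

end StarSpan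

namespace IsFactorization

variable {B C : AddSubgroup A}

theorem symm (h : IsFactorization B C) : IsFactorization C B := fun a => by
  obtain ⟨b, hb, c, hc, hbc⟩ := h (-a)
  exact ⟨-c, C.neg_mem hc, -b, B.neg_mem hb, by rw [← neg_add_rev, ← hbc, neg_neg]⟩

theorem exists_eq_circ (h : IsFactorization B C) (hC : IsLeftIdeal C) (a : A) :
    ∃ b ∈ B, ∃ c ∈ C, a = circ b c := by
  obtain ⟨b, hb, c, hc, rfl⟩ := h a
  exact ⟨b, hb, lam (cinv b) c, hC _ c hc, (circ_lam_cinv b c).symm⟩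

theorem starSpan_eq_starSpan_top (h : IsFactorization B C) (hBtriv : IsTrivialOn (B : Set A)) :
    starSpan (B : Set A) (C : Set A) = starSpan (B : Set A) (⊤ : AddSubgroup A) := by
  apply le_antisymm
  · exact starSpan_le.2 fun b hb c _ => bstar_mem_starSpan hb (AddSubgroup.mem_top c)
  · refine starSpan_le.2 fun b hb a _ => ?_
    obtain ⟨c, hc, b', hb', rfl⟩ := h.symm a
    have hbb' : bstar b b' = 0 := bstar_eq_zero_iff.2 (hBtriv.lam_eq hb hb')
    have hbc : bstar b (c + b') = bstar b c := by
      rw [bstar_add_right, hbb', add_zero, add_neg_cancel, add_zero]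
    exact hbc ▸ bstar_mem_starSpan hb hc

theorem normal_starSpan (h : IsFactorization B C) (hBtriv : IsTrivialOn (B : Set A)) :
    (starSpan (B : Set A) (C : Set A)).Normal :=
  h.starSpan_eq_starSpan_top hBtriv ▸ normal_starSpan_top (B : Set A)

theorem isLeftIdeal_starSpan (h : IsFactorization B C) (hC : IsLeftIdeal C)
    (hBtriv : IsTrivialOn (B : Set A)) (hCtriv : IsTrivialOn (C : Set A)) :
    IsLeftIdeal (starSpan (B : Set A) (C : Set A)) := by
  intro a x hx
  obtain ⟨b, hb, c, hc, rfl⟩ := h.exists_eq_circ hC a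
  have hcx : lam c x = x := hCtriv.lam_eq hc (hC.starSpan_le_self hx)
  rw [lam_circ, hcx]
  exact lam_mem_starSpan (fun _ hy _ hz => hBtriv.circ_mem hy hz) hb hx

end IsFactorization

theorem IsLeftIdeal.isTrivialOn_starSpan {I : AddSubgroup A} (hI : IsLeftIdeal I)
    (hItriv : IsTrivialOn (I : Set A)) (X : Set A) :
    IsTrivialOn (starSpan X (I : Set A) : Set A) :=
  hItriv.mono hI.starSpan_le_self

end SkewBrace

/-- if `A = B + C` is a factorization through left ideals which are trivial
as skew braces, then `B*C` and `C*B` are strong left ideals of `A` (left ideals that are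
normal subgroups of `(A,+)`) and both are trivial as skew braces. -/
theorem stmt7 {A : Type*} [SkewBrace A] (B C : AddSubgroup A)
    (hB : ∀ a : A, ∀ x ∈ B, lam a x ∈ B)
    (hC : ∀ a : A, ∀ x ∈ C, lam a x ∈ C)
    (hBtriv : ∀ x ∈ B, ∀ y ∈ B, x + y = circ x y)
    (hCtriv : ∀ x ∈ C, ∀ y ∈ C, x + y = circ x y)
    (hfact : ∀ a : A, ∃ b ∈ B, ∃ c ∈ C, a = b + c) :
    (∀ a : A, ∀ x ∈ starSpan (B : Set A) (C : Set A), lam a x ∈ starSpan (B : Set A) (C : Set A)) ∧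
    (starSpan (B : Set A) (C : Set A)).Normal ∧
    (∀ x ∈ starSpan (B : Set A) (C : Set A), ∀ y ∈ starSpan (B : Set A) (C : Set A),
      x + y = circ x y) ∧
    (∀ a : A, ∀ x ∈ starSpan (C : Set A) (B : Set A), lam a x ∈ starSpan (C : Set A) (B : Set A)) ∧
    (starSpan (C : Set A) (B : Set A)).Normal ∧
    (∀ x ∈ starSpan (C : Set A) (B : Set A), ∀ y ∈ starSpan (C : Set A) (B : Set A),
      x + y = circ x y) := by
  have hBC : IsFactorization B C := hfact
  have hCB : IsFactorization C B := hBC.symm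
  exact ⟨hBC.isLeftIdeal_starSpan hC hBtriv hCtriv, hBC.normal_starSpan hBtriv,
    IsLeftIdeal.isTrivialOn_starSpan hC hCtriv B,
    hCB.isLeftIdeal_starSpan hB hCtriv hBtriv, hCB.normal_starSpan hCtriv,
    IsLeftIdeal.isTrivialOn_starSpan hB hBtriv C⟩
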